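/- Let M, C_1,…,C_n, S_1,…,S_n, Y_1,…,Y_n be jointly distributed random variables with finite ranges such that for each i ∈ {1,…,n}, the pair (C_i, S_i) is independent of (C_{i+1}^n, S_{i+1}^n). Then I(C^n, S^n ; Y^n, M) ≥ Σ_{i=1}^n I(C_i, S_i ; M, Y^i, S_{i+1}^n), where C^n = (C_1,…,C_n), S^n = (S_1,…,S_n), Y^n = (Y_1,…,Y_n), Y^i = (Y_1,…,Y_i), S_{i+1}^n = (S_{i+1},…,S_n), and S_{n+1}^n is interpreted as a constant. -/

import Mathlib

open Finset

/-- The Shannon entropy `H(q) = −Σ_{a : q(a)>0} q(a) log₂ q(a)` of a pmf on a finite set. -/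
noncomputable def shannonEnt {α : Type} [Fintype α] (q : α → ℝ) : ℝ :=
  -∑ a, if 0 < q a then q a * Real.logb 2 (q a) else 0

/-- The distribution (pushforward pmf) of a random variable `X` on a finite probability
space with pmf `μ`. -/
def rvDist {Ω α : Type} [Fintype Ω] [DecidableEq α] (μ : Ω → ℝ) (X : Ω → α) : α → ℝ :=
  fun a => ∑ ω, if X ω = a then μ ω else 0

/-- The Shannon entropy `H(X)` of a finite-valued random variable `X`. -/
noncomputable def Hrv {Ω α : Type} [Fintype Ω] [Fintype α] [DecidableEq α]
    (μ : Ω → ℝ) (X : Ω → α) : ℝ :=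
  shannonEnt (rvDist μ X)

/-- The mutual information `I(X;Y) = H(X) + H(Y) − H(X,Y)`. -/
noncomputable def MIrv {Ω α β : Type} [Fintype Ω] [Fintype α] [Fintype β]
    [DecidableEq α] [DecidableEq β] (μ : Ω → ℝ) (X : Ω → α) (Y : Ω → β) : ℝ :=
  Hrv μ X + Hrv μ Y - Hrv μ (fun ω => (X ω, Y ω))

/-- `X` and `Y` are independent: their joint distribution factorizes. -/
def IndepRV {Ω α β : Type} [Fintype Ω] [DecidableEq α] [DecidableEq β]
    (μ : Ω → ℝ) (X : Ω → α) (Y : Ω → β) : Prop :=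
  ∀ a b, rvDist μ (fun ω => (X ω, Y ω)) (a, b) = rvDist μ X a * rvDist μ Y b


section helpers
variable {Ω α β γ : Type} [Fintype Ω] [Fintype α] [Fintype β] [Fintype γ]
  [DecidableEq α] [DecidableEq β] [DecidableEq γ] (μ : Ω → ℝ)

lemma sum_rvDist_mul (X : Ω → α) (g : α → ℝ) :
    ∑ a, rvDist μ X a * g a = ∑ ω, μ ω * g (X ω) := by
  simp only [rvDist, Finset.sum_mul]
  rw [Finset.sum_comm]
  refine Finset.sum_congr rfl fun ω _ => ?_
  simp [ite_mul]

lemma rvDist_nonneg (hμ0 : ∀ ω, 0 ≤ μ ω) (X : Ω → α) (a : α) : 0 ≤ rvDist μ X a :=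
  Finset.sum_nonneg fun ω _ => by split_ifs <;> simp [hμ0]

lemma rvDist_pos (hμ0 : ∀ ω, 0 ≤ μ ω) (X : Ω → α) (ω : Ω) (h : 0 < μ ω) :
    0 < rvDist μ X (X ω) := by
  refine Finset.sum_pos' (fun ω _ => by split_ifs <;> simp [hμ0]) ⟨ω, Finset.mem_univ _, ?_⟩
  simpa using h

lemma Hrv_eq (hμ0 : ∀ ω, 0 ≤ μ ω) (X : Ω → α) :
    Hrv μ X = -∑ ω, μ ω * Real.logb 2 (rvDist μ X (X ω)) := by
  rw [← sum_rvDist_mul μ X (fun a => Real.logb 2 (rvDist μ X a))]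
  unfold Hrv shannonEnt
  congr 1
  refine Finset.sum_congr rfl fun a _ => ?_
  split_ifs with h
  · rfl
  · have : rvDist μ X a = 0 := le_antisymm (not_lt.1 h) (rvDist_nonneg μ hμ0 X a)
    simp [this]

lemma Hrv_congr (hμ0 : ∀ ω, 0 ≤ μ ω) (X : Ω → α) (X' : Ω → β)
    (h : ∀ ω ω', X ω = X ω' ↔ X' ω = X' ω') : Hrv μ X = Hrv μ X' := by
  rw [Hrv_eq μ hμ0, Hrv_eq μ hμ0]
  simp only [rvDist, h]

lemma Hrv_indep (hμ0 : ∀ ω, 0 ≤ μ ω) (X : Ω → α) (A : Ω → β) (h : IndepRV μ X A) :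
    Hrv μ (fun ω => (X ω, A ω)) = Hrv μ X + Hrv μ A := by
  rw [Hrv_eq μ hμ0, Hrv_eq μ hμ0, Hrv_eq μ hμ0, ← neg_add, ← Finset.sum_add_distrib]
  congr 1
  refine Finset.sum_congr rfl fun ω _ => ?_
  rcases (hμ0 ω).eq_or_lt with h0 | h0
  · simp [← h0]
  · rw [h, Real.logb_mul (rvDist_pos μ hμ0 X ω h0).ne' (rvDist_pos μ hμ0 A ω h0).ne', mul_add]

lemma sum_rvDist_fst (X : Ω → α) (V : Ω → β) (v : β) :
    ∑ x, rvDist μ (fun ω => (X ω, V ω)) (x, v) = rvDist μ V v := by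
  simp only [rvDist]
  rw [Finset.sum_comm]
  refine Finset.sum_congr rfl fun ω _ => ?_
  by_cases h : V ω = v <;> simp [Prod.ext_iff, h]

lemma MIrv_dp (hμ0 : ∀ ω, 0 ≤ μ ω) (hμ1 : ∑ ω, μ ω = 1) (X : Ω → α) (W : Ω → β) (f : β → γ) :
    MIrv μ X (fun ω => f (W ω)) ≤ MIrv μ X W := by
  set V : Ω → γ := fun ω => f (W ω) with hV
  set XV : Ω → α × γ := fun ω => (X ω, V ω) with hXV
  set XW : Ω → α × β := fun ω => (X ω, W ω) with hXW
  let q : α × β → ℝ := fun p => rvDist μ W p.2 * rvDist μ XV (p.1, f p.2) /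
    (rvDist μ XW p * rvDist μ V (f p.2))
  have hl2 : 0 < Real.log 2 := Real.log_pos (by norm_num)
  have key : ∑ ω, μ ω * q (XW ω) ≤ 1 := by
    rw [← sum_rvDist_mul μ XW q, Fintype.sum_prod_type_right]
    have h1 : ∑ w, rvDist μ W w = 1 := by
      have := sum_rvDist_mul μ W (fun _ => 1)
      simpa [hμ1] using this
    rw [← h1]
    refine Finset.sum_le_sum fun w _ => ?_
    have hW := rvDist_nonneg μ hμ0 W w
    have hVn := rvDist_nonneg μ hμ0 V (f w)
    calc ∑ x, rvDist μ XW (x, w) * q (x, w)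
        ≤ ∑ x, rvDist μ XV (x, f w) * (rvDist μ W w / rvDist μ V (f w)) := by
          refine Finset.sum_le_sum fun x _ => ?_
          have h2 := rvDist_nonneg μ hμ0 XV (x, f w)
          rcases (rvDist_nonneg μ hμ0 XW (x, w)).eq_or_lt with h0 | h0
          · rw [← h0, zero_mul]; positivity
          · apply le_of_eq
            simp only [q]
            rw [← mul_div_assoc, mul_div_mul_left _ _ h0.ne']
            ring
      _ = rvDist μ V (f w) * (rvDist μ W w / rvDist μ V (f w)) := by
          rw [← Finset.sum_mul, hXV, sum_rvDist_fst]
      _ ≤ rvDist μ W w := by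
          rcases hVn.eq_or_lt with h0 | h0
          · rw [← h0]; simpa using hW
          · rw [mul_div_cancel₀ _ h0.ne']
  have hlog : ∑ ω, μ ω * (Real.logb 2 (rvDist μ W (W ω)) + Real.logb 2 (rvDist μ XV (XV ω))
      - Real.logb 2 (rvDist μ XW (XW ω)) - Real.logb 2 (rvDist μ V (V ω)))
      ≤ ∑ ω, (μ ω * q (XW ω) - μ ω) / Real.log 2 := by
    refine Finset.sum_le_sum fun ω _ => ?_
    rcases (hμ0 ω).eq_or_lt with h0 | h0
    · simp [← h0]
    have a1 := rvDist_pos μ hμ0 W ω h0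
    have a2 := rvDist_pos μ hμ0 XV ω h0
    have a3 := rvDist_pos μ hμ0 XW ω h0
    have a4 := rvDist_pos μ hμ0 V ω h0
    have hq : q (XW ω) = rvDist μ W (W ω) * rvDist μ XV (XV ω) /
      (rvDist μ XW (XW ω) * rvDist μ V (V ω)) := rfl
    have hqp : 0 < q (XW ω) := by rw [hq]; positivity
    have hle := Real.log_le_sub_one_of_pos hqp
    have e : Real.log (q (XW ω)) = Real.log (rvDist μ W (W ω)) + Real.log (rvDist μ XV (XV ω))
      - Real.log (rvDist μ XW (XW ω)) - Real.log (rvDist μ V (V ω)) := by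
      rw [hq, Real.log_div (by positivity) (by positivity), Real.log_mul a1.ne' a2.ne',
        Real.log_mul a3.ne' a4.ne']
      ring
    have e2 : μ ω * (Real.logb 2 (rvDist μ W (W ω)) + Real.logb 2 (rvDist μ XV (XV ω))
      - Real.logb 2 (rvDist μ XW (XW ω)) - Real.logb 2 (rvDist μ V (V ω)))
      = μ ω * Real.log (q (XW ω)) / Real.log 2 := by
      rw [e]; simp only [Real.logb]; ring
    rw [e2]
    gcongr
    nlinarith
  have hfin : ∑ ω, (μ ω * q (XW ω) - μ ω) / Real.log 2 ≤ 0 := by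
    rw [← Finset.sum_div, Finset.sum_sub_distrib, hμ1]
    exact div_nonpos_of_nonpos_of_nonneg (by linarith) hl2.le
  have hh := hlog.trans hfin
  simp only [mul_sub, mul_add, Finset.sum_sub_distrib, Finset.sum_add_distrib] at hh
  unfold MIrv
  rw [Hrv_eq μ hμ0 V, Hrv_eq μ hμ0 W, Hrv_eq μ hμ0 XV, Hrv_eq μ hμ0 XW]
  linarith

end helpers

/-- **Single-letterization of the leakage term.** If for each `i` the pair `(C_i, S_i)` is
independent of `(C_{i+1}^n, S_{i+1}^n)`, then
`I(C^n, S^n ; Y^n, M) ≥ Σ_{i=1}^n I(C_i, S_i ; M, Y^i, S_{i+1}^n)`. -/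
theorem leakage_single_letterization
    {Ω α β γ η : Type} [Fintype Ω] [Fintype α] [Fintype β] [Fintype γ] [Fintype η]
    [DecidableEq α] [DecidableEq β] [DecidableEq γ] [DecidableEq η]
    (μ : Ω → ℝ) (hμ0 : ∀ ω, 0 ≤ μ ω) (hμ1 : ∑ ω, μ ω = 1)
    (n : ℕ) (M : Ω → α) (C : Fin n → Ω → β) (S : Fin n → Ω → γ) (Y : Fin n → Ω → η)
    (hindep : ∀ i : Fin n, IndepRV μ (fun ω => (C i ω, S i ω))
      (fun ω => ((fun j : {j : Fin n // i < j} => C j ω),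
        (fun j : {j : Fin n // i < j} => S j ω)))) :
    ∑ i : Fin n,
        MIrv μ (fun ω => (C i ω, S i ω))
          (fun ω => (M ω, (fun j : {j : Fin n // j ≤ i} => Y j ω),
            (fun j : {j : Fin n // i < j} => S j ω)))
      ≤ MIrv μ (fun ω => ((fun i : Fin n => C i ω), (fun i : Fin n => S i ω)))
          (fun ω => ((fun i : Fin n => Y i ω), M ω)) := by
  classical
  let A : (k : ℕ) → Ω → ({j : Fin n // k ≤ j.val} → β × γ) :=
    fun k ω j => (C j ω, S j ω)
  let Z : Ω → (Fin n → η) × α := fun ω => ((fun i : Fin n => Y i ω), M ω)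
  let G : ℕ → ℝ := fun k => Hrv μ (A k) + Hrv μ Z - Hrv μ (fun ω => (A k ω, Z ω))
  -- equality of the tails `A k` splits off the first entry
  have hA : ∀ (k : ℕ) (ω ω' : Ω), A k ω = A k ω' ↔
      ∀ j : Fin n, k ≤ j.val → C j ω = C j ω' ∧ S j ω = S j ω' := by
    intro k ω ω'
    simp only [A, funext_iff, Subtype.forall, Prod.ext_iff]
  have hsplit : ∀ (i : Fin n) (ω ω' : Ω), A i.val ω = A i.val ω' ↔
      (C i ω = C i ω' ∧ S i ω = S i ω') ∧ A (i.val + 1) ω = A (i.val + 1) ω' := by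
    intro i ω ω'
    rw [hA, hA]
    constructor
    · intro h
      exact ⟨h i le_rfl, fun j hj => h j (by omega)⟩
    · rintro ⟨h1, h2⟩ j hj
      rcases hj.eq_or_lt with h | h
      · rw [← Fin.ext h]; exact h1
      · exact h2 j h
  have hstep : ∀ i : Fin n, MIrv μ (fun ω => (C i ω, S i ω))
          (fun ω => (M ω, (fun j : {j : Fin n // j ≤ i} => Y j ω),
            (fun j : {j : Fin n // i < j} => S j ω))) ≤ G i.val - G (i.val + 1) := by
    intro i
    have hdp := MIrv_dp μ hμ0 hμ1 (fun ω => (C i ω, S i ω)) (fun ω => (A (i.val + 1) ω, Z ω))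
      (fun w => (w.2.2, (fun j : {j : Fin n // j ≤ i} => w.2.1 j),
        (fun j : {j : Fin n // i < j} => (w.1 ⟨j.1, j.2⟩).2)))
    refine hdp.trans (le_of_eq ?_)
    have h1 := Hrv_indep μ hμ0 _ _ (hindep i)
    have h2 : Hrv μ (A i.val) = Hrv μ (fun ω => ((C i ω, S i ω),
        ((fun j : {j : Fin n // i < j} => C j ω), (fun j : {j : Fin n // i < j} => S j ω)))) := by
      refine Hrv_congr μ hμ0 _ _ fun ω ω' => ?_
      rw [hsplit, hA]
      simp only [Prod.mk.injEq, funext_iff, Subtype.forall, forall_and, imp_and]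
      rfl
    have h3 : Hrv μ (A (i.val + 1)) = Hrv μ (fun ω =>
        ((fun j : {j : Fin n // i < j} => C j ω), (fun j : {j : Fin n // i < j} => S j ω))) := by
      refine Hrv_congr μ hμ0 _ _ fun ω ω' => ?_
      rw [hA]
      simp only [Prod.mk.injEq, funext_iff, Subtype.forall, forall_and, imp_and]
      rfl
    have h4 : Hrv μ (fun ω => (A i.val ω, Z ω)) =
        Hrv μ (fun ω => ((C i ω, S i ω), (A (i.val + 1) ω, Z ω))) := by
      refine Hrv_congr μ hμ0 _ _ fun ω ω' => ?_
      simp only [Prod.mk.injEq, hsplit]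
      tauto
    simp only [G, MIrv]
    rw [h4, h2, h1, h3]
    ring
  have h0 : G 0 = MIrv μ (fun ω => ((fun i : Fin n => C i ω), (fun i : Fin n => S i ω)))
          (fun ω => ((fun i : Fin n => Y i ω), M ω)) := by
    have e : ∀ ω ω', A 0 ω = A 0 ω' ↔ ((fun i : Fin n => C i ω), (fun i : Fin n => S i ω)) =
        ((fun i : Fin n => C i ω'), (fun i : Fin n => S i ω')) := by
      intro ω ω'
      rw [hA]
      simp only [Prod.mk.injEq, funext_iff, Nat.zero_le, forall_true_left, forall_and]
    simp only [G, MIrv]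
    rw [Hrv_congr μ hμ0 _ _ e]
    congr 1
    refine Hrv_congr μ hμ0 _ _ fun ω ω' => ?_
    exact Prod.mk_inj.trans ((and_congr (e ω ω') Iff.rfl).trans Prod.mk_inj.symm)
  have hn : G n = 0 := by
    have e : ∀ ω ω', A n ω = A n ω' := by
      intro ω ω'
      rw [hA]
      intro j hj
      exact absurd j.2 (by omega)
    have e1 : Hrv μ (A n) = 0 := by
      rw [Hrv_eq μ hμ0]
      have : ∀ ω, rvDist μ (A n) (A n ω) = 1 := by
        intro ω
        rw [← hμ1]
        exact Finset.sum_congr rfl fun ω' _ => by rw [if_pos (e ω' ω)]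
      simp [this]
    have e2 : Hrv μ (fun ω => (A n ω, Z ω)) = Hrv μ Z := by
      refine Hrv_congr μ hμ0 _ _ fun ω ω' => ?_
      simp [e ω ω']
    simp only [G]
    rw [e1, e2]; ring
  calc _ ≤ ∑ i : Fin n, (G i.val - G (i.val + 1)) := Finset.sum_le_sum fun i _ => hstep i
    _ = G 0 - G n := by
      rw [Fin.sum_univ_eq_sum_range (fun k => G k - G (k + 1)), Finset.sum_range_sub']
    _ = _ := by rw [hn, h0, sub_zero]
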